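/- Let f : [0,∞) → ℝ be bounded with ‖f‖_∞ := sup_{y ∈ [0,∞)} |f(y)| < ∞, let n ≥ 1, x ∈ (0,∞), and set m = 2⌈nx⌉. Then the truncated Szász-Mirakjan operator satisfies |S_n(f;x) − S̃_{n,m}(f;x)| ≤ ‖f‖_∞ / (n·x). -/

import Mathlib

/-!
`S_n(f;x)` is the expectation of `f(K/n)` for a Poisson variable `K` of rate `r = nx`, and the
truncation restricts this expectation to the event `K ≤ m`, so the error is at most
`‖f‖_∞ · P(K > m)`. Since `m + 1 ≥ 2r`, on the event `K > m` the variable `K` deviates from its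
mean `r` by at least `r`; as its variance is `r`, Chebyshev's inequality bounds the probability by
`r / r² = 1 / r`.
-/

open MeasureTheory ProbabilityTheory
open scoped NNReal

lemma natCast_sq_eq_descFactorial_add {R : Type*} [Ring R] (k : ℕ) :
    (k : R) ^ 2 = k.descFactorial 2 + k.descFactorial 1 := by
  rw [Nat.cast_descFactorial_two, Nat.descFactorial_one]
  noncomm_ring

section PoissonMoments

variable (r : ℝ≥0)

lemma hasSum_poisson_mul_descFactorial (j : ℕ) :
    HasSum (fun k : ℕ ↦ Real.exp (-r) * r ^ k / k.factorial * k.descFactorial j)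
      ((r : ℝ) ^ j) := by
  have hshift (k : ℕ) : Real.exp (-r) * (r : ℝ) ^ (k + j) / (k + j).factorial *
      (k + j).descFactorial j = (r : ℝ) ^ j * (Real.exp (-r) * r ^ k / k.factorial) := by
    have hfact : ((k + j).factorial : ℝ) = k.factorial * (k + j).descFactorial j := by
      rw [← Nat.factorial_mul_descFactorial (Nat.le_add_left j k), Nat.add_sub_cancel,
        Nat.cast_mul]
    have hdesc : ((k + j).descFactorial j : ℝ) ≠ 0 := by
      simp [Nat.descFactorial_eq_zero_iff_lt]
    rw [hfact]
    field_simp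
    ring
  have hhead : ∑ k ∈ Finset.range j,
      Real.exp (-r) * (r : ℝ) ^ k / k.factorial * k.descFactorial j = 0 :=
    Finset.sum_eq_zero fun k hk ↦ by
      simp [Nat.descFactorial_eq_zero_iff_lt.mpr (Finset.mem_range.mp hk)]
  rw [← hasSum_nat_add_iff' j, hhead, sub_zero]
  simpa only [hshift, mul_one] using (hasSum_one_poissonMeasure r).mul_left ((r : ℝ) ^ j)

lemma integrable_descFactorial_poissonMeasure (j : ℕ) :
    Integrable (fun k : ℕ ↦ (k.descFactorial j : ℝ)) (poissonMeasure r) := by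
  simpa only [integrable_poissonMeasure_iff, Real.norm_natCast] using
    (hasSum_poisson_mul_descFactorial r j).summable

lemma integral_descFactorial_poissonMeasure (j : ℕ) :
    ∫ k, (k.descFactorial j : ℝ) ∂poissonMeasure r = (r : ℝ) ^ j := by
  simpa only [integral_poissonMeasure, smul_eq_mul] using
    (hasSum_poisson_mul_descFactorial r j).tsum_eq

lemma integral_natCast_poissonMeasure : ∫ k, (k : ℝ) ∂poissonMeasure r = r := by
  simpa using integral_descFactorial_poissonMeasure r 1

lemma memLp_two_natCast_poissonMeasure :
    MemLp (fun k : ℕ ↦ (k : ℝ)) 2 (poissonMeasure r) := by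
  rw [memLp_two_iff_integrable_sq .of_discrete]
  simp only [natCast_sq_eq_descFactorial_add]
  exact (integrable_descFactorial_poissonMeasure r 2).add
    (integrable_descFactorial_poissonMeasure r 1)

lemma variance_natCast_poissonMeasure :
    variance (fun k : ℕ ↦ (k : ℝ)) (poissonMeasure r) = r := by
  have hsq : ∫ k, (k : ℝ) ^ 2 ∂poissonMeasure r = (r : ℝ) ^ 2 + r := by
    simp only [natCast_sq_eq_descFactorial_add]
    rw [integral_add (integrable_descFactorial_poissonMeasure r 2)
      (integrable_descFactorial_poissonMeasure r 1)]
    simp only [integral_descFactorial_poissonMeasure, pow_one]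
  rw [variance_eq_sub (memLp_two_natCast_poissonMeasure r), integral_natCast_poissonMeasure]
  simp only [Pi.pow_apply, hsq, add_sub_cancel_left]

end PoissonMoments

lemma poissonMeasure_real_Ici_le {r : ℝ≥0} {N : ℕ} (hrN : (r : ℝ) < N) :
    (poissonMeasure r).real (Set.Ici N) ≤ r / (N - r) ^ 2 := by
  have hsub : Set.Ici N ⊆ {k : ℕ | (N : ℝ) - r ≤ |(k : ℝ) - ∫ i, (i : ℝ) ∂poissonMeasure r|} := by
    intro k hk
    rw [Set.mem_ofPred_eq, integral_natCast_poissonMeasure]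
    have hNk : (N : ℝ) ≤ k := Nat.cast_le.mpr hk
    exact (sub_le_sub_right hNk _).trans (le_abs_self _)
  have hcheb := meas_ge_le_variance_div_sq (memLp_two_natCast_poissonMeasure r) (sub_pos.mpr hrN)
  rw [variance_natCast_poissonMeasure] at hcheb
  exact ENNReal.toReal_le_of_le_ofReal (by positivity) ((measure_mono hsub).trans hcheb)

lemma poissonMeasure_real_Ici_le_inv_of_two_mul_le {r : ℝ≥0} (hr : (0 : ℝ) < r) {N : ℕ}
    (hrN : 2 * (r : ℝ) ≤ N) :
    (poissonMeasure r).real (Set.Ici N) ≤ (r : ℝ)⁻¹ := by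
  calc (poissonMeasure r).real (Set.Ici N) ≤ r / (N - r) ^ 2 :=
        poissonMeasure_real_Ici_le (by linarith)
    _ ≤ r / (r : ℝ) ^ 2 := by
        gcongr
        linarith
    _ = (r : ℝ)⁻¹ := by field_simp

section Truncation

variable {E : Type*} [NormedAddCommGroup E] [NormedSpace ℝ E] [CompleteSpace E]

lemma norm_integral_sub_sum_le {α : Type*} [MeasurableSpace α] [MeasurableSingletonClass α]
    {μ : Measure α} [IsFiniteMeasure μ] {g : α → E} (hg : Integrable g μ) {s : Finset α} {C : ℝ}
    (hC : ∀ a ∉ s, ‖g a‖ ≤ C) :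
    ‖∫ a, g a ∂μ - ∑ a ∈ s, μ.real {a} • g a‖ ≤ C * μ.real (s : Set α)ᶜ := by
  rw [← setIntegral_finset s hg.integrableOn, ← integral_add_compl s.measurableSet hg,
    add_sub_cancel_left]
  exact norm_setIntegral_le_of_norm_le_const (measure_lt_top μ _) hC

lemma norm_tsum_poisson_sub_sum_range_le {r : ℝ≥0} (hr : (0 : ℝ) < r) {g : ℕ → E} {C : ℝ}
    (hC : ∀ k, ‖g k‖ ≤ C) {N : ℕ} (hrN : 2 * (r : ℝ) ≤ N) :
    ‖∑' k : ℕ, (Real.exp (-r) * r ^ k / k.factorial) • g k -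
        ∑ k ∈ Finset.range N, (Real.exp (-r) * r ^ k / k.factorial) • g k‖ ≤ C / r := by
  have hg : Integrable g (poissonMeasure r) := .of_bound .of_discrete C (.of_forall hC)
  have hcompl : (Finset.range N : Set ℕ)ᶜ = Set.Ici N := by
    rw [Finset.coe_range, Set.compl_Iio]
  rw [← integral_poissonMeasure' hg]
  simp only [← poissonMeasure_real_singleton]
  calc _ ≤ C * (poissonMeasure r).real (Set.Ici N) :=
        hcompl ▸ norm_integral_sub_sum_le hg fun k _ ↦ hC k
    _ ≤ C * (r : ℝ)⁻¹ := by
        have hC_nonneg : 0 ≤ C := (norm_nonneg _).trans (hC 0)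
        gcongr
        exact poissonMeasure_real_Ici_le_inv_of_two_mul_le hr hrN
    _ = C / r := (div_eq_mul_inv _ _).symm

theorem szasz_mirakjan_truncation_error_general
    (f : ℝ → E) (hbdd : BddAbove ((fun y ↦ ‖f y‖) '' Set.Ici (0 : ℝ)))
    {a : ℝ} (ha : 0 < a) {x : ℝ} (hx : 0 < x) {N : ℕ} (hN : 2 * (a * x) ≤ N) :
    ‖∑' k : ℕ, (Real.exp (-(a * x)) * (a * x) ^ k / k.factorial) • f (k / a) -
        ∑ k ∈ Finset.range N, (Real.exp (-(a * x)) * (a * x) ^ k / k.factorial) • f (k / a)‖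
      ≤ sSup ((fun y ↦ ‖f y‖) '' Set.Ici (0 : ℝ)) / (a * x) := by
  have hf (k : ℕ) : ‖f (k / a)‖ ≤ sSup ((fun y ↦ ‖f y‖) '' Set.Ici (0 : ℝ)) :=
    le_csSup hbdd (Set.mem_image_of_mem _ (Set.mem_Ici.mpr (by positivity)))
  exact norm_tsum_poisson_sub_sum_range_le (r := ⟨a * x, by positivity⟩) (mul_pos ha hx) hf hN

end Truncation

/-- Truncation error for the Szász-Mirakjan operator of a bounded function with truncation point
`m = 2⌈nx⌉`: `|S_n(f;x) - S̃_{n,m}(f;x)| ≤ ‖f‖_∞ / (n·x)`. -/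
theorem szasz_mirakjan_truncation_error
    (f : ℝ → ℝ) (hbdd : BddAbove ((fun y => |f y|) '' Set.Ici (0 : ℝ)))
    (n : ℕ) (hn : 1 ≤ n) (x : ℝ) (hx : 0 < x) :
    |(∑' (k : ℕ), f ((k : ℝ) / n) * (Real.exp (-(n * x)) * (n * x) ^ k / k.factorial)) -
        ∑ k ∈ Finset.range (2 * ⌈(n : ℝ) * x⌉₊ + 1),
          f ((k : ℝ) / n) * (Real.exp (-(n * x)) * (n * x) ^ k / k.factorial)|
      ≤ sSup ((fun y => |f y|) '' Set.Ici (0 : ℝ)) / (n * x) := by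
  have hN : 2 * ((n : ℝ) * x) ≤ (2 * ⌈(n : ℝ) * x⌉₊ + 1 : ℕ) := by
    push_cast
    linarith [Nat.le_ceil ((n : ℝ) * x)]
  simpa only [Real.norm_eq_abs, smul_eq_mul, mul_comm (f _)] using
    szasz_mirakjan_truncation_error_general f hbdd (Nat.cast_pos.mpr hn) hx hN
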